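/- arXiv:math/0404348 — 3 statements merged into one kernel-verified Lean document; each statement's English description precedes it below -/
import Mathlib

section
/- Let {M_m} be a sequence of n×n symmetric matrices converging to 0 with M_m/‖M_m‖ → M, let μ ∈ ℝ^n with μ₁ ≥ … ≥ μ_n and blocks I₁,…,I_r, and let U_m → U be orthogonal matrices with Diag μ + M_m = U_m (Diag λ(Diag μ + M_m)) U_mᵀ for all m, where λ(·) is the vector of eigenvalues in nonincreasing order. Let h = (λ(X₁ᵀM X₁),…,λ(X_rᵀM X_r)) ∈ ℝ^n, where X_l is the n×|I_l| matrix whose columns are the standard basis vectors e^i, i ∈ I_l. Then UᵀM_in U = Diag h. -/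
open scoped BigOperators
open Filter Asymptotics Matrix

attribute [local instance] Matrix.normedAddCommGroup

noncomputable section

/-- A `k`-tensor on `ℝ^n`, identified with its array of entries. -/
abbrev Tensor (k n : ℕ) : Type := (Fin k → Fin n) → ℝ

/-- A `2k`-tensor on `ℝ^n`, with its indices grouped into two groups of `k`. -/
abbrev Tensor2 (k n : ℕ) : Type := (Fin k → Fin n) → (Fin k → Fin n) → ℝ

/-- The `σ`-Hadamard product of `k` matrices:
`(H₁ ∘_σ ⋯ ∘_σ H_k)^{i₁…i_k} = ∏ s, H_s^{i_s i_{σ⁻¹(s)}}`. -/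
def hadamardProd {k n : ℕ} (σ : Equiv.Perm (Fin k))
    (H : Fin k → Matrix (Fin n) (Fin n) ℝ) : Tensor k n :=
  fun i => ∏ s, H s (i s) (i (σ⁻¹ s))

/-- The dot product of two `k`-tensors. -/
def tdot {k n : ℕ} (T₁ T₂ : Tensor k n) : ℝ :=
  ∑ p : Fin k → Fin n, T₁ p * T₂ p

/-- `Diag^σ T`, the `2k`-tensor equal to `T^{i₁…i_k}` when `i_s = j_{σ(s)}` for all `s`,
and `0` otherwise. -/
def diagPerm {k n : ℕ} (σ : Equiv.Perm (Fin k)) (T : Tensor k n) : Tensor2 k n :=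
  fun i j => if ∀ s, i s = j (σ s) then T i else 0

/-- A `2k`-tensor viewed as a `k`-tensor on matrix arguments:
`S[H₁,…,H_k] = ∑_{p,q} S^{p₁…p_k}_{q₁…q_k} ∏ s, H_s^{p_s q_s}`. -/
def apply2 {k n : ℕ} (S : Tensor2 k n)
    (H : Fin k → Matrix (Fin n) (Fin n) ℝ) : ℝ :=
  ∑ p : Fin k → Fin n, ∑ q : Fin k → Fin n, S p q * ∏ s, H s (p s) (q s)

/-- Conjugation `U S Uᵀ` of a `2k`-tensor `S` by a matrix `U`. -/
def conj2 {k n : ℕ} (U : Matrix (Fin n) (Fin n) ℝ) (S : Tensor2 k n) : Tensor2 k n :=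
  fun i j => ∑ p : Fin k → Fin n, ∑ q : Fin k → Fin n,
    S p q * ((∏ s, U (i s) (p s)) * ∏ s, U (j s) (q s))

/-- For a `2(k+1)`-tensor `S` viewed as a `(k+1)`-tensor on matrices, `S[H]` fixes the last
matrix argument to `H`, producing a `2k`-tensor. -/
def lastApply {k n : ℕ} (S : Tensor2 (k+1) n)
    (H : Matrix (Fin n) (Fin n) ℝ) : Tensor2 k n :=
  fun i j => ∑ a : Fin n, ∑ b : Fin n, S (Fin.snoc i a) (Fin.snoc j b) * H a b

/-- `T[x]`: contraction of the last index of a `(k+1)`-tensor against a vector. -/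
def contract {k n : ℕ} (T : Tensor (k+1) n) (x : Fin n → ℝ) : Tensor k n :=
  fun i => ∑ a : Fin n, T (Fin.snoc i a) * x a

/-- A permutation `σ` of `{1,…,k}` viewed as a permutation of `{1,…,k+1}` fixing `k+1`. -/
def extPerm {k : ℕ} (σ : Equiv.Perm (Fin k)) : Equiv.Perm (Fin (k+1)) :=
  (Equiv.permCongr finSuccEquivLast).symm σ.optionCongr

/-- `σ_{(l)} := σ ∘ τ_l`, where `τ_l` is the transposition `(l, k+1)` (and `σ` fixes `k+1`).
Here `l : Fin (k+1)`; taking `l = Fin.last k` gives `σ_{(k+1)} = σ`. -/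
def permIns {k : ℕ} (σ : Equiv.Perm (Fin k)) (l : Fin (k+1)) : Equiv.Perm (Fin (k+1)) :=
  extPerm σ * Equiv.swap l (Fin.last k)

/-- A tensor is `μ`-block-constant if its entries agree on componentwise `μ`-equivalent
multi-indices (`i ∼ j` iff `μ i = μ j`). -/
def BlockConstant {k n : ℕ} (μ : Fin n → ℝ) (T : Tensor k n) : Prop :=
  ∀ i j : Fin k → Fin n, (∀ s, μ (i s) = μ (j s)) → T i = T j

/-- `H_in`: the diagonal-block part of `H` (w.r.t. the blocks of `μ`). -/
def matIn {n : ℕ} (μ : Fin n → ℝ) (H : Matrix (Fin n) (Fin n) ℝ) :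
    Matrix (Fin n) (Fin n) ℝ :=
  Matrix.of fun i j => if μ i = μ j then H i j else 0

/-- `H_out = H - H_in`: the off-diagonal-block part of `H`. -/
def matOut {n : ℕ} (μ : Fin n → ℝ) (H : Matrix (Fin n) (Fin n) ℝ) :
    Matrix (Fin n) (Fin n) ℝ :=
  H - matIn μ H

/-- The divided-difference tensor `T^{(l)}_out` of a `k`-tensor `T`, a `(k+1)`-tensor. -/
def outDD {k n : ℕ} (μ : Fin n → ℝ) (T : Tensor k n) (l : Fin k) : Tensor (k+1) n :=
  fun i => if μ (i l.castSucc) = μ (i (Fin.last k)) then 0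
    else (T (Function.update (fun s => i s.castSucc) l (i (Fin.last k)))
          - T (fun s => i s.castSucc)) / (μ (i (Fin.last k)) - μ (i l.castSucc))

/-- `T^{τ_l}`: the `(k+1)`-tensor equal to `T^{i₁…i_k}` on the hyperplane `i_l = i_{k+1}`
and `0` elsewhere. -/
def liftTau {k n : ℕ} (T : Tensor k n) (l : Fin k) : Tensor (k+1) n :=
  fun i => if i l.castSucc = i (Fin.last k) then T (fun s => i s.castSucc) else 0

/-- `T^{τ_l}_in`: the "inflated" `(k+1)`-tensor, equal to
`T^{i₁…i_{l-1} i_{k+1} i_{l+1}…i_k}` when `μ_{i_l} = μ_{i_{k+1}}` and `0` otherwise. -/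
def liftTauIn {k n : ℕ} (μ : Fin n → ℝ) (T : Tensor k n) (l : Fin k) : Tensor (k+1) n :=
  fun i => if μ (i l.castSucc) = μ (i (Fin.last k))
    then T (Function.update (fun s => i s.castSucc) l (i (Fin.last k))) else 0

/-- `lam` is the map sending each symmetric matrix to the vector of its eigenvalues
ordered nonincreasingly: it is nonincreasing and realized by an orthogonal
diagonalization. -/
def IsEigCF {n : ℕ} (lam : Matrix (Fin n) (Fin n) ℝ → Fin n → ℝ) : Prop :=
  ∀ A : Matrix (Fin n) (Fin n) ℝ, A.IsSymm →
    Antitone (lam A) ∧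
    ∃ U : Matrix (Fin n) (Fin n) ℝ, Uᵀ * U = 1 ∧
      A = U * Matrix.diagonal (lam A) * Uᵀ

/-- `h` is the concatenated vector `(λ(X₁ᵀ A X₁), …, λ(X_rᵀ A X_r))` of the nonincreasingly
ordered eigenvalues of the diagonal blocks of `A` (blocks determined by `μ`):
equivalently, `h` is nonincreasing within each block of `μ` and `Diag h` is obtained from
`A_in` by conjugating with a block-diagonal orthogonal matrix. -/
def IsBlockEig {n : ℕ} (μ : Fin n → ℝ) (A : Matrix (Fin n) (Fin n) ℝ)
    (h : Fin n → ℝ) : Prop :=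
  (∀ i j : Fin n, i ≤ j → μ i = μ j → h j ≤ h i) ∧
  ∃ V : Matrix (Fin n) (Fin n) ℝ, Vᵀ * V = 1 ∧
    (∀ i j, μ i ≠ μ j → V i j = 0) ∧
    Vᵀ * matIn μ A * V = Matrix.diagonal h

/-! Write `D = Diag μ` and `D + Mₐ = Uₐ Lₐ Uₐ⁻¹` with `Lₐ` diagonal. The limit of `Lₐ` is diagonal
with nonincreasing entries and similar to `D`, hence equal to `D`, so the limit `U` of `Uₐ` commutes
with `D`. Rearranging the decomposition gives `Uₐ Lₐ - D Uₐ = Mₐ Uₐ`, which bounds the off-block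
part of `Uₐ` by the size of `Mₐ`; precisely, `‖Mₐ‖⁻¹ (Uₐ D - D Uₐ) → (M U)_out = M_out U`. Since
`Lₐ - D = Uₐ⁻¹ Mₐ Uₐ - Uₐ⁻¹ (Uₐ D - D Uₐ)`, the scaled eigenvalue increments `‖Mₐ‖⁻¹ (Lₐ - D)`
converge to `U⁻¹ M U - U⁻¹ M_out U = U⁻¹ M_in U`. Hence this matrix is diagonal, with entries
nonincreasing in each block, and `M_in` has only one such diagonal form. -/

section Similarity

variable {R ι : Type*} [CommRing R] [Fintype ι] [DecidableEq ι]

theorem charpoly_mul_mul_of_mul_eq_one {P Q : Matrix ι ι R} (hPQ : P * Q = 1)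
    (A : Matrix ι ι R) : (P * A * Q).charpoly = A.charpoly := by
  rw [Matrix.charpoly_mul_comm, ← Matrix.mul_assoc, mul_eq_one_comm.mp hPQ, Matrix.one_mul]

theorem roots_charpoly_diagonal [IsDomain R] (d : ι → R) :
    (diagonal d).charpoly.roots = Finset.univ.val.map d := by
  rw [charpoly_diagonal, ← Polynomial.roots_multiset_prod_X_sub_C (Finset.univ.val.map d),
    Multiset.map_map]
  rfl

theorem commute_diagonal_iff [NoZeroDivisors R] {d : ι → R} {V : Matrix ι ι R} :
    Commute (diagonal d) V ↔ ∀ i j, d i ≠ d j → V i j = 0 := by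
  have entry (i j : ι) : d i * V i j = V i j * d j ↔ (d i ≠ d j → V i j = 0) := by
    rw [mul_comm (V i j), mul_eq_mul_right_iff, or_iff_not_imp_left]
  simp only [commute_iff_eq, ← Matrix.ext_iff, diagonal_mul, mul_diagonal, entry]

end Similarity

section Uniqueness

theorem eq_of_antitone_of_map_univ_eq {R : Type*} [PartialOrder R] {n : ℕ} {f g : Fin n → R}
    (hf : Antitone f) (hg : Antitone g)
    (hfg : Finset.univ.val.map f = Finset.univ.val.map g) : f = g := by
  rw [Fin.univ_val_map, Fin.univ_val_map, Multiset.coe_eq_coe] at hfg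
  exact List.ofFn_injective (hfg.eq_of_sortedGE hf.sortedGE_ofFn hg.sortedGE_ofFn)

theorem eq_of_antitone_of_conj_eq_diagonal {R : Type*} [CommRing R] [IsDomain R] [PartialOrder R]
    {n : ℕ} {f g : Fin n → R} (hf : Antitone f) (hg : Antitone g)
    {A P Q V W : Matrix (Fin n) (Fin n) R} (hPV : P * V = 1) (hQW : Q * W = 1)
    (hAf : P * A * V = diagonal f) (hAg : Q * A * W = diagonal g) : f = g := by
  refine eq_of_antitone_of_map_univ_eq hf hg ?_
  rw [← roots_charpoly_diagonal, ← roots_charpoly_diagonal, ← hAf, ← hAg,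
    charpoly_mul_mul_of_mul_eq_one hPV, charpoly_mul_mul_of_mul_eq_one hQW]

variable {K : Type*} [Field K] [LinearOrder K] [IsStrictOrderedRing K]

theorem eventually_antitone_add_smul {ι : Type*} [Finite ι] [Preorder ι] {h μ : ι → K}
    (hμ : Antitone μ) (hh : ∀ i j, i ≤ j → μ i = μ j → h j ≤ h i) :
    ∀ᶠ t : K in atTop, Antitone (h + t • μ) := by
  refine eventually_all.2 fun i => eventually_all.2 fun j =>
    eventually_imp_distrib_left.2 fun hij => ?_
  simp only [Pi.add_apply, Pi.smul_apply, smul_eq_mul]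
  rcases (hμ hij).eq_or_lt with hμij | hμij
  · refine Eventually.of_forall fun t => ?_
    rw [hμij]
    exact add_le_add_left (hh i j hij hμij.symm) _
  · filter_upwards [eventually_ge_atTop ((h j - h i) / (μ i - μ j))] with t ht
    rw [div_le_iff₀ (sub_pos.2 hμij)] at ht
    linarith

/-- Adding a large multiple of `diagonal μ` separates the blocks, and so reduces this to the
uniqueness of globally ordered eigenvalues. -/
theorem eq_of_commute_of_conj_eq_diagonal {n : ℕ} {μ h g : Fin n → K} (hμ : Antitone μ)
    (hh : ∀ i j, i ≤ j → μ i = μ j → h j ≤ h i) (hg : ∀ i j, i ≤ j → μ i = μ j → g j ≤ g i)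
    {A P Q V W : Matrix (Fin n) (Fin n) K} (hPV : P * V = 1) (hQW : Q * W = 1)
    (hV : Commute (diagonal μ) V) (hW : Commute (diagonal μ) W)
    (hAh : P * A * V = diagonal h) (hAg : Q * A * W = diagonal g) : h = g := by
  obtain ⟨t, hht, hgt⟩ :=
    ((eventually_antitone_add_smul hμ hh).and (eventually_antitone_add_smul hμ hg)).exists
  have shift {f : Fin n → K} {S T : Matrix (Fin n) (Fin n) K} (hST : S * T = 1)
      (hT : Commute (diagonal μ) T) (hf : S * A * T = diagonal f) :
      S * (A + t • diagonal μ) * T = diagonal (f + t • μ) := by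
    rw [Matrix.mul_add, Matrix.add_mul, hf, Matrix.mul_smul, Matrix.smul_mul, Matrix.mul_assoc,
      hT.eq, ← Matrix.mul_assoc, hST, Matrix.one_mul, ← diagonal_smul, diagonal_add]
    rfl
  exact add_right_cancel
    (eq_of_antitone_of_conj_eq_diagonal hht hgt hPV hQW (shift hPV hV hAh) (shift hQW hW hAg))

end Uniqueness

section Blocks

variable {n : ℕ} {μ : Fin n → ℝ}

theorem matIn_mul_of_commute {V : Matrix (Fin n) (Fin n) ℝ} (hV : Commute (diagonal μ) V)
    (A : Matrix (Fin n) (Fin n) ℝ) : matIn μ (A * V) = matIn μ A * V := by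
  ext i j
  have hterm (k : Fin n) :
      (if μ i = μ j then A i k * V k j else 0) = matIn μ A i k * V k j := by
    by_cases hkj : μ k = μ j
    · simp only [matIn, of_apply, hkj, ite_mul, zero_mul]
    · simp only [commute_diagonal_iff.1 hV k j hkj, mul_zero, ite_self]
  rw [mul_apply, ← Finset.sum_congr rfl fun k _ => hterm k, matIn, of_apply, mul_apply]
  split_ifs <;> simp only [Finset.sum_const_zero]

theorem matOut_mul_of_commute {V : Matrix (Fin n) (Fin n) ℝ} (hV : Commute (diagonal μ) V)
    (A : Matrix (Fin n) (Fin n) ℝ) : matOut μ (A * V) = matOut μ A * V := by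
  rw [matOut, matOut, matIn_mul_of_commute hV, Matrix.sub_mul]

theorem matOut_apply (A : Matrix (Fin n) (Fin n) ℝ) (i j : Fin n) :
    matOut μ A i j = if μ i = μ j then 0 else A i j := by
  simp only [matOut, matIn, Matrix.sub_apply, of_apply]
  split_ifs <;> simp

theorem IsBlockEig.eq_of_conj_eq_diagonal {A P V : Matrix (Fin n) (Fin n) ℝ} {h g : Fin n → ℝ}
    (hh : IsBlockEig μ A h) (hμ : Antitone μ) (hg : ∀ i j, i ≤ j → μ i = μ j → g j ≤ g i)
    (hPV : P * V = 1) (hV : Commute (diagonal μ) V) (hAg : P * matIn μ A * V = diagonal g) :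
    g = h := by
  obtain ⟨hmono, W, hWo, hWblock, hAh⟩ := hh
  exact eq_of_commute_of_conj_eq_diagonal hμ hg hmono hPV hWo hV
    (commute_diagonal_iff.2 hWblock) hAg hAh

end Blocks

section Perturbation

variable {α : Type*} {F : Filter α}

theorem exists_eq_diagonal_of_tendsto_diagonal {R ι : Type*} [Zero R] [TopologicalSpace R]
    [T2Space R] [DecidableEq ι] [F.NeBot] {l : α → ι → R} {B : Matrix ι ι R}
    (hB : Tendsto (fun a => diagonal (l a)) F (nhds B)) :
    ∃ b : ι → R, B = diagonal b ∧ Tendsto l F (nhds b) := by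
  have hdiag : Tendsto l F (nhds B.diag) := by
    simpa only [Function.comp_def, diag_diagonal] using
      (continuous_matrix_diag.tendsto B).comp hB
  exact ⟨B.diag, tendsto_nhds_unique hB
    ((continuous_id.matrix_diagonal.tendsto B.diag).comp hdiag), hdiag⟩

theorem tendsto_eigenvalues_of_tendsto_diagonal {K : Type*} [CommRing K] [IsDomain K]
    [PartialOrder K] [TopologicalSpace K] [OrderClosedTopology K] [IsTopologicalSemiring K]
    {n : ℕ} [F.NeBot] {μ : Fin n → K} (hμ : Antitone μ) {l : α → Fin n → K}
    (hl : ∀ a, Antitone (l a)) {A W U : α → Matrix (Fin n) (Fin n) K}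
    {Wlim Ulim : Matrix (Fin n) (Fin n) K} (hA : Tendsto A F (nhds (diagonal μ)))
    (hW : Tendsto W F (nhds Wlim)) (hU : Tendsto U F (nhds Ulim)) (hWU : Wlim * Ulim = 1)
    (hAl : ∀ a, W a * A a * U a = diagonal (l a)) :
    Wlim * diagonal μ * Ulim = diagonal μ ∧ Tendsto l F (nhds μ) := by
  have hconj : Tendsto (fun a => diagonal (l a)) F (nhds (Wlim * diagonal μ * Ulim)) := by
    simpa only [hAl] using (hW.mul hA).mul hU
  obtain ⟨ν, hν, hlν⟩ := exists_eq_diagonal_of_tendsto_diagonal hconj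
  have hνanti : Antitone ν := fun i j hij =>
    le_of_tendsto_of_tendsto' (hlν.apply_nhds j) (hlν.apply_nhds i) fun a => hl a hij
  obtain rfl : ν = μ :=
    eq_of_antitone_of_conj_eq_diagonal hνanti hμ hWU (mul_one 1) hν (by simp)
  exact ⟨hν, hlν⟩

variable {n : ℕ} {μ : Fin n → ℝ}

theorem tendsto_mul_diagonal_sub_diagonal_mul {l : α → Fin n → ℝ} (hl : Tendsto l F (nhds μ))
    {X : α → Matrix (Fin n) (Fin n) ℝ} {N : Matrix (Fin n) (Fin n) ℝ}
    (hX : Tendsto (fun a => X a * diagonal (l a) - diagonal μ * X a) F (nhds N)) :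
    Tendsto (fun a => X a * diagonal μ - diagonal μ * X a) F (nhds (matOut μ N)) := by
  refine tendsto_pi_nhds.2 fun i => tendsto_pi_nhds.2 fun j => ?_
  simp only [Matrix.sub_apply, diagonal_mul, mul_diagonal, matOut_apply]
  split_ifs with hij
  · simp only [hij, mul_comm, sub_self, tendsto_const_nhds]
  have hgap : Tendsto (fun a => l a j - μ i) F (nhds (μ j - μ i)) :=
    (hl.apply_nhds j).sub_const (μ i)
  have hgap_ne : μ j - μ i ≠ 0 := sub_ne_zero.2 (Ne.symm hij)
  have hratio : Tendsto (fun a => (μ j - μ i) / (l a j - μ i)) F (nhds 1) := by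
    rw [← div_self hgap_ne]
    exact tendsto_const_nhds.div hgap hgap_ne
  have hentry : Tendsto (fun a => X a i j * l a j - μ i * X a i j) F (nhds (N i j)) := by
    simpa only [Matrix.sub_apply, diagonal_mul, mul_diagonal] using
      (hX.apply_nhds i).apply_nhds j
  rw [← mul_one (N i j)]
  refine (hentry.mul hratio).congr' ?_
  filter_upwards [hgap.eventually_ne hgap_ne] with a ha
  field_simp

theorem tendsto_smul_eigenvalues_sub {c : α → ℝ} {l : α → Fin n → ℝ} (hl : Tendsto l F (nhds μ))
    {M W U : α → Matrix (Fin n) (Fin n) ℝ} {Mlim Wlim Ulim : Matrix (Fin n) (Fin n) ℝ}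
    (hM : Tendsto (fun a => c a • M a) F (nhds Mlim))
    (hW : Tendsto W F (nhds Wlim)) (hU : Tendsto U F (nhds Ulim)) (hWU : ∀ a, W a * U a = 1)
    (hcomm : Commute (diagonal μ) Ulim)
    (hdec : ∀ a, diagonal μ + M a = U a * diagonal (l a) * W a) :
    Tendsto (fun a => diagonal (c a • (l a - μ))) F (nhds (Wlim * matIn μ Mlim * Ulim)) := by
  have hMU (a : α) : M a * U a = U a * diagonal (l a) - diagonal μ * U a := by
    rw [eq_sub_iff_add_eq', ← Matrix.add_mul, hdec, Matrix.mul_assoc, hWU, Matrix.mul_one]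
  have hcMU : Tendsto (fun a => c a • M a * U a) F (nhds (Mlim * Ulim)) := hM.mul hU
  have hcommutator : Tendsto (fun a => c a • U a * diagonal μ - diagonal μ * (c a • U a)) F
      (nhds (matOut μ Mlim * Ulim)) := by
    rw [← matOut_mul_of_commute hcomm]
    refine tendsto_mul_diagonal_sub_diagonal_mul hl (hcMU.congr fun a => ?_)
    rw [Matrix.smul_mul, hMU, Matrix.smul_mul, Matrix.mul_smul, ← smul_sub]
  have hlimit : Wlim * (Mlim * Ulim - matOut μ Mlim * Ulim) = Wlim * matIn μ Mlim * Ulim := by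
    rw [← Matrix.sub_mul, matOut, sub_sub_cancel, Matrix.mul_assoc]
  rw [← hlimit]
  refine (hW.mul (hcMU.sub hcommutator)).congr fun a => ?_
  calc W a * (c a • M a * U a - (c a • U a * diagonal μ - diagonal μ * (c a • U a)))
      = c a • (W a * U a * (diagonal (l a) - diagonal μ)) := by
        rw [Matrix.smul_mul, hMU, Matrix.smul_mul, Matrix.mul_smul, ← smul_sub, ← smul_sub,
          sub_sub_sub_cancel_right, ← Matrix.mul_sub, Matrix.mul_smul, Matrix.mul_assoc]
    _ = diagonal (c a • (l a - μ)) := by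
        rw [hWU, Matrix.one_mul, diagonal_sub, ← diagonal_smul]; rfl

end Perturbation

theorem statement7_general {α : Type*} {F : Filter α} [F.NeBot] {n : ℕ} {μ : Fin n → ℝ}
    (hμ : Antitone μ) {l : α → Fin n → ℝ} (hl : ∀ a, Antitone (l a))
    {c : α → ℝ} (hc : ∀ a, 0 ≤ c a) {M : α → Matrix (Fin n) (Fin n) ℝ}
    (hM0 : Tendsto M F (nhds 0)) {Mlim : Matrix (Fin n) (Fin n) ℝ}
    (hMdir : Tendsto (fun a => c a • M a) F (nhds Mlim))
    {W U : α → Matrix (Fin n) (Fin n) ℝ} (hWU : ∀ a, W a * U a = 1)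
    {Wlim Ulim : Matrix (Fin n) (Fin n) ℝ} (hWlim : Tendsto W F (nhds Wlim))
    (hUlim : Tendsto U F (nhds Ulim))
    (hdec : ∀ a, diagonal μ + M a = U a * diagonal (l a) * W a)
    {h : Fin n → ℝ} (hh : IsBlockEig μ Mlim h) :
    Wlim * matIn μ Mlim * Ulim = diagonal h := by
  have hWUlim : Wlim * Ulim = 1 :=
    tendsto_nhds_unique (hWlim.mul hUlim) (by simp only [hWU, tendsto_const_nhds])
  have hA : Tendsto (fun a => diagonal μ + M a) F (nhds (diagonal μ)) := by
    simpa only [add_zero] using tendsto_const_nhds.add hM0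
  have hdiag (a : α) : W a * (diagonal μ + M a) * U a = diagonal (l a) := by
    rw [hdec, Matrix.mul_assoc, Matrix.mul_assoc, hWU, Matrix.mul_one, ← Matrix.mul_assoc, hWU,
      Matrix.one_mul]
  obtain ⟨hconj, hlμ⟩ := tendsto_eigenvalues_of_tendsto_diagonal hμ hl hA hWlim hUlim hWUlim hdiag
  have hcomm : Commute (diagonal μ) Ulim := by
    rw [commute_iff_eq, ← hconj, ← Matrix.mul_assoc, ← Matrix.mul_assoc,
      mul_eq_one_comm.mp hWUlim, Matrix.one_mul, hconj]
  obtain ⟨g, hg, hlg⟩ := exists_eq_diagonal_of_tendsto_diagonal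
    (tendsto_smul_eigenvalues_sub hlμ hMdir hWlim hUlim hWU hcomm hdec)
  have hganti (i j : Fin n) (hij : i ≤ j) (hμij : μ i = μ j) : g j ≤ g i := by
    refine le_of_tendsto_of_tendsto' (hlg.apply_nhds j) (hlg.apply_nhds i) fun a => ?_
    simp only [Pi.smul_apply, Pi.sub_apply, hμij]
    exact smul_le_smul_of_nonneg_left (sub_le_sub_right (hl a hij) _) (hc a)
  rw [hg, hh.eq_of_conj_eq_diagonal hμ hganti hWUlim hcomm hg]

/-- Theorem `important`, part 2. With `M_m → 0` symmetric,
`M_m/‖M_m‖ → M`, `μ` nonincreasing, orthogonal `U_m → U` satisfying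
`Diag μ + M_m = U_m (Diag λ(Diag μ + M_m)) U_mᵀ`, and `h` the concatenated vector of
blockwise nonincreasingly ordered eigenvalues `(λ(X₁ᵀMX₁),…,λ(X_rᵀMX_r))` of `M`
(encoded by `IsBlockEig`), one has `Uᵀ M_in U = Diag h`. -/
theorem statement7 {n : ℕ}
    (μ : Fin n → ℝ) (hμ : Antitone μ)
    (lam : Matrix (Fin n) (Fin n) ℝ → Fin n → ℝ) (hlam : IsEigCF lam)
    (M : ℕ → Matrix (Fin n) (Fin n) ℝ) (hMsym : ∀ m, (M m).IsSymm)
    (hM0 : Tendsto M atTop (nhds 0))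
    (Mlim : Matrix (Fin n) (Fin n) ℝ)
    (hMdir : Tendsto (fun m => ‖M m‖⁻¹ • M m) atTop (nhds Mlim))
    (U : ℕ → Matrix (Fin n) (Fin n) ℝ) (hUo : ∀ m, (U m)ᵀ * U m = 1)
    (Ulim : Matrix (Fin n) (Fin n) ℝ) (hUlim : Tendsto U atTop (nhds Ulim))
    (hdec : ∀ m, Matrix.diagonal μ + M m
      = U m * Matrix.diagonal (lam (Matrix.diagonal μ + M m)) * (U m)ᵀ)
    (h : Fin n → ℝ) (hh : IsBlockEig μ Mlim h)
    : Ulimᵀ * matIn μ Mlim * Ulim = Matrix.diagonal h := by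
  have hl (m : ℕ) := (hlam _ ((isSymm_diagonal μ).add (hMsym m))).1
  exact statement7_general hμ hl (fun m => inv_nonneg.2 (norm_nonneg (M m))) hM0 hMdir hUo
    ((continuous_id.matrix_transpose.tendsto Ulim).comp hUlim) hUlim hdec hh

end
end

section
/- Let T be any (k+1)-tensor on ℝ^n, x any vector in ℝ^n, V any orthogonal n×n matrix, and σ a permutation on {1,…,k}. Then V(Diag^σ(T[x]))Vᵀ = (V(Diag^{σ_{(k+1)}} T)Vᵀ)[V(Diag x)Vᵀ], where T[x] denotes the k-tensor T[·,…,·,x] and, for a 2(k+1)-tensor S viewed as a (k+1)-tensor on matrices, S[H] denotes the 2k-tensor obtained by fixing the last matrix argument to H. -/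
open scoped BigOperators
open Filter Asymptotics Matrix

attribute [local instance] Matrix.normedAddCommGroup

noncomputable section

/-!
`S ↦ V S Vᵀ` acts slot by slot, so the matrix in the last slot of `V S Vᵀ` can be moved inside:
`(V S Vᵀ)[H] = V (S[Vᵀ H V]) Vᵀ`, for every `V` and `H`. Since `σ` is extended by a fixed point,
`Diag^σ T` is supported on equal last indices, so there it sees only the diagonal of `Vᵀ H V`,
which is `x` when `H = V (Diag x) Vᵀ` and `V` is orthogonal.
-/

theorem sum_eq_sum_sum_snoc {α M : Type*} [Fintype α] [AddCommMonoid M] {k : ℕ}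
    (f : (Fin (k + 1) → α) → M) :
    ∑ p, f p = ∑ p : Fin k → α, ∑ c, f (Fin.snoc p c) := by
  rw [Finset.sum_comm, ← Fintype.sum_prod_type',
    ← Equiv.sum_comp (Fin.snocEquiv fun _ : Fin (k + 1) => α)]
  rfl

theorem sum_smul_vecMulVec_rows {l m n o R : Type*} [Fintype l] [Fintype m] [CommSemiring R]
    (A : Matrix l n R) (H : Matrix l m R) (B : Matrix m o R) :
    ∑ a, ∑ b, H a b • vecMulVec (A a) (B b) = Aᵀ * H * B := by
  ext c d
  simp only [Matrix.sum_apply, Matrix.smul_apply, vecMulVec_apply, Matrix.mul_apply,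
    transpose_apply, Finset.sum_mul, smul_eq_mul]
  rw [Finset.sum_comm]
  refine Finset.sum_congr rfl fun b _ => Finset.sum_congr rfl fun a _ => ?_
  ring

theorem transpose_mul_conj_mul {m n R : Type*} [Fintype m] [Fintype n] [DecidableEq n] [Semiring R]
    {V : Matrix m n R} (hV : Vᵀ * V = 1) (D : Matrix n n R) :
    Vᵀ * (V * D * Vᵀ) * V = D := by
  calc Vᵀ * (V * D * Vᵀ) * V
      = (Vᵀ * V) * D * (Vᵀ * V) := by simp only [Matrix.mul_assoc]
    _ = D := by rw [hV, Matrix.one_mul, Matrix.mul_one]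

section Permutation

variable {k : ℕ} (σ : Equiv.Perm (Fin k))

@[simp]
theorem extPerm_castSucc (s : Fin k) : extPerm σ s.castSucc = (σ s).castSucc := by
  simp [extPerm, Equiv.permCongr]

@[simp]
theorem extPerm_last : extPerm σ (Fin.last k) = Fin.last k := by
  simp [extPerm, Equiv.permCongr]

end Permutation

section Conjugation

variable {n k : ℕ}

theorem isLinearMap_conj2 (U : Matrix (Fin n) (Fin n) ℝ) :
    IsLinearMap ℝ (conj2 U : Tensor2 k n → Tensor2 k n) where
  map_add S S' := by
    ext i j
    simp only [conj2, Pi.add_apply, add_mul, Finset.sum_add_distrib]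
  map_smul r S := by
    ext i j
    simp only [conj2, Pi.smul_apply, smul_eq_mul, Finset.mul_sum, mul_assoc]

theorem isLinearMap_lastApply (S : Tensor2 (k + 1) n) : IsLinearMap ℝ (lastApply S) where
  map_add H H' := by
    ext i j
    simp only [lastApply, Matrix.add_apply, Pi.add_apply, mul_add, Finset.sum_add_distrib]
  map_smul r H := by
    ext i j
    simp only [lastApply, Matrix.smul_apply, Pi.smul_apply, smul_eq_mul, Finset.mul_sum,
      mul_left_comm]

theorem conj2_snoc_snoc (U : Matrix (Fin n) (Fin n) ℝ) (S : Tensor2 (k + 1) n)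
    (i j : Fin k → Fin n) (a b : Fin n) :
    conj2 U S (Fin.snoc i a) (Fin.snoc j b)
      = conj2 U (lastApply S (vecMulVec (U a) (U b))) i j := by
  simp only [conj2, lastApply, sum_eq_sum_sum_snoc, Fin.prod_univ_castSucc, Fin.snoc_castSucc,
    Fin.snoc_last, vecMulVec_apply, Finset.sum_mul]
  refine Finset.sum_congr rfl fun p _ => ?_
  rw [Finset.sum_comm]
  refine Finset.sum_congr rfl fun q _ => Finset.sum_congr rfl fun c _ =>
    Finset.sum_congr rfl fun d _ => ?_
  ring

theorem lastApply_conj2 (U : Matrix (Fin n) (Fin n) ℝ) (S : Tensor2 (k + 1) n)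
    (H : Matrix (Fin n) (Fin n) ℝ) :
    lastApply (conj2 U S) H = conj2 U (lastApply S (Uᵀ * H * U)) := by
  let L : Matrix (Fin n) (Fin n) ℝ →ₗ[ℝ] Tensor2 k n :=
    (isLinearMap_conj2 U).mk' ∘ₗ (isLinearMap_lastApply S).mk'
  calc lastApply (conj2 U S) H
      = ∑ a, ∑ b, H a b • L (vecMulVec (U a) (U b)) := by
        ext i j
        simp only [lastApply, conj2_snoc_snoc, Finset.sum_apply, Pi.smul_apply, smul_eq_mul,
          mul_comm (H _ _)]
        rfl
    _ = L (∑ a, ∑ b, H a b • vecMulVec (U a) (U b)) := by simp only [map_sum, map_smul]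
    _ = conj2 U (lastApply S (Uᵀ * H * U)) := by rw [sum_smul_vecMulVec_rows]; rfl

theorem diagPerm_extPerm_snoc_snoc (σ : Equiv.Perm (Fin k)) (T : Tensor (k + 1) n)
    (i j : Fin k → Fin n) (a b : Fin n) :
    diagPerm (extPerm σ) T (Fin.snoc i a) (Fin.snoc j b)
      = if a = b then diagPerm σ (fun p => T (Fin.snoc p a)) i j else 0 := by
  simp only [diagPerm, Fin.forall_fin_succ', extPerm_castSucc, extPerm_last, Fin.snoc_castSucc,
    Fin.snoc_last, and_comm, ite_and]

theorem lastApply_diagPerm_extPerm (σ : Equiv.Perm (Fin k)) (T : Tensor (k + 1) n)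
    (H : Matrix (Fin n) (Fin n) ℝ) :
    lastApply (diagPerm (extPerm σ) T) H = diagPerm σ (contract T H.diag) := by
  ext i j
  simp only [lastApply, diagPerm_extPerm_snoc_snoc, ite_mul, zero_mul, Finset.sum_ite_eq,
    Finset.mem_univ, if_true]
  simp only [diagPerm, contract, diag_apply]
  split_ifs
  · rfl
  · simp only [zero_mul, Finset.sum_const_zero]

theorem statement10_general (T : Tensor (k + 1) n) (V H : Matrix (Fin n) (Fin n) ℝ)
    (σ : Equiv.Perm (Fin k)) :
    conj2 V (diagPerm σ (contract T (Vᵀ * H * V).diag))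
      = lastApply (conj2 V (diagPerm (extPerm σ) T)) H := by
  rw [lastApply_conj2, lastApply_diagPerm_extPerm]

end Conjugation

/-- Proposition `prop11`. For any `(k+1)`-tensor `T`, vector `x`,
orthogonal `V`, and permutation `σ` of `{1,…,k}`:
`V(Diag^σ(T[x]))Vᵀ = (V(Diag^{σ_{(k+1)}} T)Vᵀ)[V(Diag x)Vᵀ]`. -/
theorem statement10 {n k : ℕ} (T : Tensor (k+1) n) (x : Fin n → ℝ)
    (V : Matrix (Fin n) (Fin n) ℝ) (hV : Vᵀ * V = 1)
    (σ : Equiv.Perm (Fin k)) :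
    conj2 V (diagPerm σ (contract T x))
      = lastApply (conj2 V (diagPerm (extPerm σ) T)) (V * Matrix.diagonal x * Vᵀ) := by
  rw [← statement10_general, transpose_mul_conj_mul hV, diag_diagonal]

end
end

section
/- Fix μ ∈ ℝ^n. Let T be a μ-block-constant k-tensor on ℝ^n and let U be a block-diagonal orthogonal matrix (i.e., U^{ij} = 0 whenever μ_i ≠ μ_j). Then for any permutation σ on {1,…,k}, U(Diag^σ T)Uᵀ = Diag^σ T. -/
open scoped BigOperators
open Filter Asymptotics Matrix

attribute [local instance] Matrix.normedAddCommGroup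

noncomputable section

/-!
A `2k`-tensor is a matrix whose rows and columns are indexed by multi-indices. In these terms,
conjugation by `U` is ordinary matrix conjugation by the Kronecker power `W = U ⊗ ⋯ ⊗ U`, and
`Diag^σ T` is the product of the diagonal matrix of `T` with a permutation matrix. Block-diagonality
of `U` makes `W` commute with the first factor, and `W` always commutes with a permutation of the
tensor slots. Since `W` is orthogonal, conjugation by it fixes the product.
-/

section Commute

variable {m R : Type*} [Fintype m] [DecidableEq m] {A : Matrix m m R}

theorem commute_diagonal_of_eq_of_ne_zero [NonUnitalNonAssocCommSemiring R] {d : m → R}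
    (h : ∀ i j, A i j ≠ 0 → d i = d j) : Commute A (diagonal d) := by
  ext i j
  rw [mul_diagonal, diagonal_mul]
  obtain hA | hA := eq_or_ne (A i j) 0
  · rw [hA, zero_mul, mul_zero]
  · rw [h i j hA, mul_comm]

theorem commute_permMatrix_of_submatrix_eq [NonAssocSemiring R] {e : Equiv.Perm m}
    (h : A.submatrix e e = A) : Commute A (e.permMatrix R) := by
  ext i j
  rw [PEquiv.mul_toMatrix_toPEquiv, PEquiv.toMatrix_toPEquiv_mul]
  simpa using congr_fun₂ h.symm i (e.symm j)

end Commute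

/-- The permutation `i ↦ i ∘ σ⁻¹` of multi-indices, which moves the entry in slot `s` to slot
`σ s`. -/
def slotPerm {κ : Type*} (ι : Type*) (σ : Equiv.Perm κ) : Equiv.Perm (κ → ι) :=
  σ.arrowCongr (Equiv.refl ι)

theorem slotPerm_apply_eq_iff {κ ι : Type*} {σ : Equiv.Perm κ} {i j : κ → ι} :
    slotPerm ι σ i = j ↔ ∀ s, i s = j (σ s) := by
  rw [← Equiv.eq_symm_apply, funext_iff]
  rfl

section KroneckerPower

variable {κ l m n R : Type*} [Fintype κ] [CommSemiring R]

/-- The Kronecker power `A ⊗ ⋯ ⊗ A` of a matrix, with one factor for each element of `κ`. Its rows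
and columns are indexed by functions on `κ` rather than by iterated products. -/
def kroneckerPower (κ : Type*) [Fintype κ] (A : Matrix m n R) : Matrix (κ → m) (κ → n) R :=
  Matrix.of fun i j => ∏ s, A (i s) (j s)

theorem kroneckerPower_apply (A : Matrix m n R) (i : κ → m) (j : κ → n) :
    kroneckerPower κ A i j = ∏ s, A (i s) (j s) :=
  rfl

theorem kroneckerPower_transpose (A : Matrix m n R) :
    kroneckerPower κ Aᵀ = (kroneckerPower κ A)ᵀ :=
  rfl

theorem kroneckerPower_one [DecidableEq m] :
    kroneckerPower κ (1 : Matrix m m R) = 1 := by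
  ext i j
  simp only [kroneckerPower_apply, Matrix.one_apply, Fintype.prod_boole, funext_iff]

theorem kroneckerPower_mul [DecidableEq κ] [Fintype m] (A : Matrix l m R) (B : Matrix m n R) :
    kroneckerPower κ (A * B) = kroneckerPower κ A * kroneckerPower κ B := by
  ext i j
  simp only [kroneckerPower_apply, Matrix.mul_apply, Fintype.prod_sum, Finset.prod_mul_distrib]

theorem kroneckerPower_submatrix_slotPerm (σ : Equiv.Perm κ) (A : Matrix m n R) :
    (kroneckerPower κ A).submatrix (slotPerm m σ) (slotPerm n σ) = kroneckerPower κ A := by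
  ext i j
  exact Equiv.prod_comp σ.symm fun s => A (i s) (j s)

end KroneckerPower

section PermDiagonal

variable {κ ι R : Type*} [Fintype κ] [DecidableEq κ] [Fintype ι] [DecidableEq ι] [CommSemiring R]

/-- The matrix `Diag^σ T` over any commutative semiring: the diagonal matrix of `T` times the
permutation matrix of `σ` acting on tensor slots. -/
def permDiagonal (σ : Equiv.Perm κ) (T : (κ → ι) → R) : Matrix (κ → ι) (κ → ι) R :=
  diagonal T * (slotPerm ι σ).permMatrix R

theorem permDiagonal_apply (σ : Equiv.Perm κ) (T : (κ → ι) → R) (i j : κ → ι) :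
    permDiagonal σ T i j = if ∀ s, i s = j (σ s) then T i else 0 := by
  simp only [permDiagonal, diagonal_mul, PEquiv.toMatrix_toPEquiv_apply, Pi.single_apply,
    eq_comm (a := j), slotPerm_apply_eq_iff, mul_ite, mul_one, mul_zero]

theorem commute_kroneckerPower_permDiagonal {β : Type*} {μ : ι → β} {T : (κ → ι) → R}
    (hT : ∀ i j : κ → ι, (∀ s, μ (i s) = μ (j s)) → T i = T j) {U : Matrix ι ι R}
    (hU : ∀ i j, μ i ≠ μ j → U i j = 0) (σ : Equiv.Perm κ) :
    Commute (kroneckerPower κ U) (permDiagonal σ T) := by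
  have hdiag : Commute (kroneckerPower κ U) (diagonal T) :=
    commute_diagonal_of_eq_of_ne_zero fun i j hij => hT i j fun s => by
      by_contra hs
      exact hij (Finset.prod_eq_zero (Finset.mem_univ s) (hU _ _ hs))
  exact hdiag.mul_right
    (commute_permMatrix_of_submatrix_eq (kroneckerPower_submatrix_slotPerm σ U))

theorem statement11_general {β : Type*} (μ : ι → β) (T : (κ → ι) → R)
    (hT : ∀ i j : κ → ι, (∀ s, μ (i s) = μ (j s)) → T i = T j)
    (U : Matrix ι ι R) (hU : Uᵀ * U = 1) (hUb : ∀ i j, μ i ≠ μ j → U i j = 0)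
    (σ : Equiv.Perm κ) :
    kroneckerPower κ U * permDiagonal σ T * (kroneckerPower κ U)ᵀ = permDiagonal σ T := by
  have hW : kroneckerPower κ U * (kroneckerPower κ U)ᵀ = 1 := by
    rw [← kroneckerPower_transpose, ← kroneckerPower_mul, mul_eq_one_comm.mp hU,
      kroneckerPower_one]
  rw [(commute_kroneckerPower_permDiagonal hT hUb σ).eq, Matrix.mul_assoc, hW, Matrix.mul_one]

end PermDiagonal

theorem of_conj2 {k n : ℕ} (U : Matrix (Fin n) (Fin n) ℝ) (S : Tensor2 k n) :
    Matrix.of (conj2 U S) =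
      kroneckerPower (Fin k) U * Matrix.of S * (kroneckerPower (Fin k) U)ᵀ := by
  ext i j
  simp only [conj2, of_apply, Matrix.mul_apply, transpose_apply, kroneckerPower_apply,
    Finset.sum_mul]
  rw [Finset.sum_comm]
  refine Finset.sum_congr rfl fun q _ => Finset.sum_congr rfl fun p _ => ?_
  ring

theorem of_diagPerm {k n : ℕ} (σ : Equiv.Perm (Fin k)) (T : Tensor k n) :
    Matrix.of (diagPerm σ T) = permDiagonal σ T := by
  ext i j
  rw [permDiagonal_apply, of_apply, diagPerm]
  congr

/-- Lemma `invarLem`. For a `μ`-block-constant `k`-tensor `T` and a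
block-diagonal orthogonal matrix `U`, `U(Diag^σ T)Uᵀ = Diag^σ T` for every permutation
`σ` of `{1,…,k}`. -/
theorem statement11 {n k : ℕ} (μ : Fin n → ℝ)
    (T : Tensor k n) (hT : BlockConstant μ T)
    (U : Matrix (Fin n) (Fin n) ℝ) (hU : Uᵀ * U = 1)
    (hUb : ∀ i j : Fin n, μ i ≠ μ j → U i j = 0)
    (σ : Equiv.Perm (Fin k)) :
    conj2 U (diagPerm σ T) = diagPerm σ T := by
  apply Matrix.of.injective
  rw [of_conj2, of_diagPerm, statement11_general μ T hT U hU hUb σ]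

end
end
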